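/- Let f ∈ ℂ[x_0,…,x_n]_d be homogeneous of degree d with V(f) not a cone, let 1 < k < d−1, and suppose the Hessian determinant hess_f = det(∂²f/∂x_i∂x_j)_{0≤i,j≤n} is not identically zero. Then there exist n+1 algebraically independent elements over ℂ among the k-th order partial derivatives {∂^α f : |α| = k}; equivalently, the k-th polar map of V(f) is not degenerate (its image has dimension n). -/

import Mathlib

/-!
Let `K = ℂ(x_0,…,x_n)` and let `S_k ⊆ K^{n+1}` be the span of the gradients of the `k`-th order
partial derivatives of `f`. If `p` is such a derivative, it is homogeneous of degree `d - k`, and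
Euler's identity applied to `∂_i p` gives `(d - k - 1) ∂_i p = ∑_j x_j ∂_i (∂_j p)`. Hence, as long as
`k + 1 < d`, the gradient of `p` lies in `S_{k+1}`, so that `S_1 ⊆ S_2 ⊆ ⋯ ⊆ S_{d-1}`
(`jacobianRow_mem_span`). Since the rows of the Hessian matrix lie in `S_1`, a nonzero Hessian
determinant forces `S_k = K^{n+1}` for `1 ≤ k ≤ d - 1` (`span_jacobianRow_pd_eq_top`). Choosing `n + 1`
derivatives of order `k` whose gradients form a basis of `K^{n+1}`, the Jacobian criterion
(`algebraicIndependent_of_jacobian`) shows that they are algebraically independent.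
-/

open MvPolynomial Module

/-- The differential operator `∂^α` on `ℂ[x_0,…,x_{N-1}]` given by a multi-index
`α : Fin N → ℕ`. -/
noncomputable def pd {N : ℕ} (α : Fin N → ℕ) :
    Module.End ℂ (MvPolynomial (Fin N) ℂ) :=
  (List.ofFn fun i =>
    ((MvPolynomial.pderiv (R := ℂ) i).toLinearMap :
      Module.End ℂ (MvPolynomial (Fin N) ℂ)) ^ (α i)).prod

/-- The Hessian determinant `det (∂²f/∂x_i∂x_j)` of a polynomial. -/
noncomputable def hessDet {N : ℕ} (f : MvPolynomial (Fin N) ℂ) :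
    MvPolynomial (Fin N) ℂ :=
  Matrix.det (Matrix.of fun i j => pderiv i (pderiv j f))

theorem pderiv_comm' {N : ℕ} (i j : Fin N) (p : MvPolynomial (Fin N) ℂ) :
    pderiv i (pderiv j p) = pderiv j (pderiv i p) := by
  ext m
  simp only [coeff_pderiv, Finsupp.add_apply, add_right_comm m (Finsupp.single i 1)]
  by_cases h : i = j
  · subst h; ring
  · simp only [Finsupp.single_apply, h, Ne.symm h, if_false, add_zero]
    ring

/-- The operators `pd α` are ordered products in a noncommutative ring; when the factors commute,
raising one exponent by one multiplies the product by that factor on the left. -/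
theorem prod_ofFn_pow_add_single {M : Type*} [Monoid M] {N : ℕ} (a : Fin N → M)
    (ha : ∀ i j, Commute (a i) (a j)) (α : Fin N → ℕ) (j : Fin N) :
    (List.ofFn fun i => a i ^ ((α + Pi.single j 1 : Fin N → ℕ) i)).prod =
      a j * (List.ofFn fun i => a i ^ (α i)).prod := by
  induction N with
  | zero => exact j.elim0
  | succ N ih =>
    simp only [List.ofFn_succ, List.prod_cons]
    cases j using Fin.cases with
    | zero => simp [pow_succ', mul_assoc]
    | succ j =>
      have h := ih (fun i => a i.succ) (fun _ _ => ha _ _) (fun i => α i.succ) j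
      have h2 : ∀ i : Fin N, (α + Pi.single j.succ 1 : Fin (N + 1) → ℕ) i.succ =
          ((fun i : Fin N => α i.succ) + Pi.single j 1 : Fin N → ℕ) i := by
        intro i
        simp [Pi.single_apply]
      simp only [h2, h]
      simp only [Pi.add_apply, Pi.single_apply, (Fin.succ_ne_zero j).symm, if_false, add_zero]
      rw [← mul_assoc, ← mul_assoc, ((ha j.succ 0).pow_right (α 0)).eq]

theorem pd_add_single {N : ℕ} (α : Fin N → ℕ) (j : Fin N) (p : MvPolynomial (Fin N) ℂ) :
    pd (α + Pi.single j 1) p = pderiv j (pd α p) := by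
  unfold pd
  rw [prod_ofFn_pow_add_single]
  · rfl
  · intro i j
    exact LinearMap.ext fun p => pderiv_comm' i j p

theorem pd_zero {N : ℕ} (p : MvPolynomial (Fin N) ℂ) : pd (0 : Fin N → ℕ) p = p := by
  simp [pd]

theorem exists_eq_add_single {N k : ℕ} (α : Fin N → ℕ) (h : ∑ t, α t = k + 1) :
    ∃ (β : Fin N → ℕ) (j : Fin N), ∑ t, β t = k ∧ α = β + Pi.single j 1 := by
  obtain ⟨j, hj⟩ : ∃ j, α j ≠ 0 := by
    by_contra! hc
    simp [hc] at h
  have hα : α = (α - Pi.single j 1) + Pi.single j 1 := by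
    funext i
    by_cases hi : i = j
    · subst hi; simp; omega
    · simp [hi]
  refine ⟨α - Pi.single j 1, j, ?_, hα⟩
  rw [hα] at h
  simpa [Finset.sum_add_distrib] using h

theorem isHomogeneous_pd {N d k : ℕ} {f : MvPolynomial (Fin N) ℂ} (hf : f.IsHomogeneous d)
    (α : Fin N → ℕ) (h : ∑ t, α t = k) : (pd α f).IsHomogeneous (d - k) := by
  induction k generalizing α with
  | zero =>
    have : α = 0 := by
      funext i
      simpa using (Finset.sum_eq_zero_iff.mp h) i (Finset.mem_univ i)
    simpa [this, pd_zero] using hf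
  | succ k ih =>
    obtain ⟨β, j, hβ, rfl⟩ := exists_eq_add_single α h
    rw [pd_add_single]
    exact (ih β hβ).pderiv

/-- Chain rule for a polynomial expression in the polynomials `g i`. -/
theorem pderiv_aeval {ι : Type*} [Fintype ι] {N : ℕ} (g : ι → MvPolynomial (Fin N) ℂ)
    (j : Fin N) (P : MvPolynomial ι ℂ) :
    pderiv j (aeval g P) = ∑ i, aeval g (pderiv i P) * pderiv j (g i) := by
  classical
  induction P using MvPolynomial.induction_on with
  | C a => simp [MvPolynomial.algebraMap_eq]
  | add p q hp hq => simp only [map_add, hp, hq, add_mul, Finset.sum_add_distrib]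
  | mul_X p i hp =>
    simp only [map_mul, aeval_X, Derivation.leibniz, hp, smul_eq_mul, map_add, pderiv_X,
      add_mul, Finset.sum_add_distrib, Finset.mul_sum]
    congr 1
    · simp [Pi.single_apply]
    · exact Finset.sum_congr rfl fun _ _ => by ring

theorem totalDegree_pderiv_le {ι : Type*} (P : MvPolynomial ι ℂ) (i : ι) :
    (pderiv i P).totalDegree ≤ P.totalDegree - 1 := by
  classical
  refine Finset.sup_le fun s hs => ?_
  rw [MvPolynomial.mem_support_iff, coeff_pderiv] at hs
  have h := le_totalDegree (MvPolynomial.mem_support_iff.mpr (left_ne_zero_of_mul hs))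
  rw [Finsupp.sum_add_index' (by simp) (by simp)] at h
  simp at h
  omega

theorem eq_C_of_pderiv_eq_zero {ι : Type*} (P : MvPolynomial ι ℂ)
    (h : ∀ i, pderiv i P = 0) : P = C (coeff 0 P) := by
  classical
  ext m
  rw [coeff_C]
  split_ifs with hm
  · rw [hm]
  · obtain ⟨i, hi⟩ := Finsupp.ne_iff.mp (Ne.symm hm)
    have hmi : m = (m - Finsupp.single i 1) + Finsupp.single i 1 := by
      rw [tsub_add_cancel_of_le]
      simpa [Nat.one_le_iff_ne_zero] using hi
    have := congrArg (coeff (m - Finsupp.single i 1)) (h i)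
    rw [coeff_pderiv, ← hmi, coeff_zero] at this
    exact (mul_eq_zero.mp this).resolve_right (Nat.cast_add_one_ne_zero _)

/-- The easy half of the Jacobian criterion, in characteristic zero. If `P(g) = 0`, then by the chain
rule the `(∂_i P)(g)` are coefficients of a linear relation between the gradients of the `g i`, so
they vanish, and each `∂_i P` is a relation of smaller degree. -/
theorem algebraicIndependent_of_jacobian {ι : Type*} [Fintype ι] {N : ℕ}
    (g : ι → MvPolynomial (Fin N) ℂ)
    (h : LinearIndependent (MvPolynomial (Fin N) ℂ) fun i => fun j => pderiv j (g i)) :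
    AlgebraicIndependent ℂ g := by
  rw [algebraicIndependent_iff]
  suffices H : ∀ m : ℕ, ∀ P : MvPolynomial ι ℂ, P.totalDegree ≤ m → aeval g P = 0 → P = 0 from
    fun P => H _ P le_rfl
  have hC : ∀ c : ℂ, aeval g (C c : MvPolynomial ι ℂ) = 0 → (C c : MvPolynomial ι ℂ) = 0 := by
    intro c hc
    rw [aeval_C, MvPolynomial.algebraMap_eq, C_eq_zero] at hc
    rw [hc, C_0]
  intro m
  induction m with
  | zero =>
    intro P hP h0
    rw [totalDegree_eq_zero_iff_eq_C.mp (Nat.le_zero.mp hP)] at h0 ⊢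
    exact hC _ h0
  | succ m ih =>
    intro P hP h0
    have hd : ∀ i, aeval g (pderiv i P) = 0 := by
      refine Fintype.linearIndependent_iff.mp h _ ?_
      funext j
      have := pderiv_aeval g j P
      rw [h0, map_zero] at this
      simpa only [Finset.sum_apply, Pi.smul_apply, smul_eq_mul, Pi.zero_apply] using this.symm
    have hP' := eq_C_of_pderiv_eq_zero P fun i =>
      ih _ ((totalDegree_pderiv_le P i).trans (by omega)) (hd i)
    rw [hP'] at h0 ⊢
    exact hC _ h0

/-- The gradient of `g`, viewed as a vector over the field of rational functions. -/
noncomputable def jacobianRow {N : ℕ} (g : MvPolynomial (Fin N) ℂ) :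
    Fin N → FractionRing (MvPolynomial (Fin N) ℂ) :=
  fun j => algebraMap _ _ (pderiv j g)

/-- Euler's identity for the partial derivatives of `p`, homogeneous of degree `e + 1 > 0`: the
gradient of `p` is a combination of the gradients of the `∂_j p`. -/
theorem jacobianRow_mem_span {N e : ℕ} (p : MvPolynomial (Fin N) ℂ) (hp : p.IsHomogeneous (e + 2)) :
    jacobianRow p ∈ Submodule.span (FractionRing (MvPolynomial (Fin N) ℂ))
      (Set.range fun j => jacobianRow (pderiv j p)) := by
  have key : ((e + 1 : ℕ) : FractionRing (MvPolynomial (Fin N) ℂ)) • jacobianRow p =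
      ∑ j, algebraMap (MvPolynomial (Fin N) ℂ) (FractionRing (MvPolynomial (Fin N) ℂ)) (X j) •
        jacobianRow (pderiv j p) := by
    funext i
    have h := (hp.pderiv (i := i)).sum_X_mul_pderiv
    have h' := congrArg
      (algebraMap (MvPolynomial (Fin N) ℂ) (FractionRing (MvPolynomial (Fin N) ℂ))) h
    simp only [pderiv_comm' _ i] at h'
    simp only [jacobianRow, Pi.smul_apply, Finset.sum_apply, smul_eq_mul]
    rw [map_sum] at h'
    simp only [map_mul] at h'
    rw [h']
    simp [nsmul_eq_mul]
  have hne : ((e + 1 : ℕ) : FractionRing (MvPolynomial (Fin N) ℂ)) ≠ 0 :=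
    Nat.cast_ne_zero.mpr e.succ_ne_zero
  rw [← Submodule.smul_mem_iff _ hne, key]
  exact Submodule.sum_mem _ fun j _ =>
    Submodule.smul_mem _ _ (Submodule.subset_span (Set.mem_range_self j))

/-- The Jacobian matrix of the `k`-th order partial derivatives has full rank. For `k = 1` it is the
Hessian matrix, and by `jacobianRow_mem_span` the row space can only grow with `k`. -/
theorem span_jacobianRow_pd_eq_top {N d k : ℕ} {f : MvPolynomial (Fin N) ℂ}
    (hf : f.IsHomogeneous d) (hhess : hessDet f ≠ 0) (hk1 : 1 ≤ k) (hk2 : k + 1 ≤ d) :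
    Submodule.span (FractionRing (MvPolynomial (Fin N) ℂ))
      (Set.range fun α : {α : Fin N → ℕ // ∑ t, α t = k} => jacobianRow (pd α.1 f)) = ⊤ := by
  induction k, hk1 using Nat.le_induction with
  | base =>
    set K := FractionRing (MvPolynomial (Fin N) ℂ)
    let A : Matrix (Fin N) (Fin N) K :=
      (algebraMap (MvPolynomial (Fin N) ℂ) K).mapMatrix
        (Matrix.of fun i j => pderiv i (pderiv j f))
    have hA : A.det ≠ 0 := by
      rw [← RingHom.map_det]
      exact (map_ne_zero_iff _ (IsFractionRing.injective _ K)).mpr hhess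
    have hli : LinearIndependent K A.row := Matrix.linearIndependent_rows_of_det_ne_zero hA
    rw [eq_top_iff, ← hli.span_eq_top_of_card_eq_finrank' (by simp)]
    refine Submodule.span_mono ?_
    rintro _ ⟨i, rfl⟩
    refine ⟨⟨0 + Pi.single i 1, by simp⟩, ?_⟩
    funext j
    simp only [pd_add_single, pd_zero, jacobianRow]
    rw [pderiv_comm']
    rfl
  | succ k hk ih =>
    rw [eq_top_iff, ← ih (by omega), Submodule.span_le]
    rintro _ ⟨⟨α, hα⟩, rfl⟩
    obtain ⟨e, rfl⟩ : ∃ e, d = e + 2 + k := ⟨d - k - 2, by omega⟩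
    have hh := isHomogeneous_pd hf α hα
    rw [Nat.add_sub_cancel] at hh
    refine Submodule.span_mono ?_ (jacobianRow_mem_span _ hh)
    rintro _ ⟨j, rfl⟩
    exact ⟨⟨α + Pi.single j 1, by simp [Finset.sum_add_distrib, hα]⟩, by simp [pd_add_single]⟩

/-- **Corollary.** Let `f` be homogeneous of degree `d`, not a cone (equivalently, its
first order partial derivatives are linearly independent over `ℂ`), let `1 < k < d−1`,
and suppose `hess_f ≠ 0`.  Then there are `n+1` algebraically independent elements over
`ℂ` among the `k`-th order partial derivatives of `f`; equivalently, the `k`-th polar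
map of `V(f)` is not degenerate. -/
theorem nondegenerate_higher_polar_of_hessian_ne_zero
    {n d k : ℕ} (f : MvPolynomial (Fin (n + 1)) ℂ) (hf : f.IsHomogeneous d)
    (hcone : LinearIndependent ℂ (fun i : Fin (n + 1) => pderiv i f))
    (hk1 : 1 < k) (hk2 : k + 1 < d)
    (hhess : hessDet f ≠ 0) :
    ∃ g : Fin (n + 1) → MvPolynomial (Fin (n + 1)) ℂ,
      (∀ i, ∃ α : Fin (n + 1) → ℕ, (∑ t, α t) = k ∧ g i = pd α f) ∧
      AlgebraicIndependent ℂ g := by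
  set K := FractionRing (MvPolynomial (Fin (n + 1)) ℂ)
  have hspan := span_jacobianRow_pd_eq_top hf hhess hk1.le hk2.le
  obtain ⟨v, hv, -, hli⟩ := Submodule.exists_fun_fin_finrank_span_eq K
    (Set.range fun α : {α : Fin (n + 1) → ℕ // ∑ t, α t = k} => jacobianRow (pd α.1 f))
  have hfin : n + 1 = finrank K (Submodule.span K (Set.range
      fun α : {α : Fin (n + 1) → ℕ // ∑ t, α t = k} => jacobianRow (pd α.1 f))) := by
    rw [hspan, finrank_top, Module.finrank_fin_fun]
  choose α hα using hv
  refine ⟨fun i => pd (α (Fin.cast hfin i)).1 f,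
    fun i => ⟨_, (α (Fin.cast hfin i)).2, rfl⟩, algebraicIndependent_of_jacobian _ ?_⟩
  have hK : LinearIndependent K
      fun i : Fin (n + 1) => jacobianRow (pd (α (Fin.cast hfin i)).1 f) := by
    have := hli.comp (Fin.cast hfin) (Fin.cast_injective hfin)
    rwa [show v ∘ Fin.cast hfin = fun i => jacobianRow (pd (α (Fin.cast hfin i)).1 f) from
      funext fun i => (hα _).symm] at this
  -- A relation over the polynomial ring is in particular one over its fraction field.
  rw [Fintype.linearIndependent_iff] at hK ⊢
  intro c hc i
  refine IsFractionRing.injective (MvPolynomial (Fin (n + 1)) ℂ) K ?_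
  rw [map_zero]
  refine hK (fun i => algebraMap _ K (c i)) ?_ i
  funext j
  have := congrArg (algebraMap _ K) (congrFun hc j)
  simpa only [jacobianRow, Finset.sum_apply, Pi.smul_apply, smul_eq_mul, map_sum, map_mul,
    Pi.zero_apply, map_zero] using this
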